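/- (Scalar Lipschitz constant, probit case.) For all y, z ∈ ℝ, |g_pro(y) − g_pro(z)| ≤ |y − z|; that is, the function g_pro(x) = 𝒩(x)/Φ_pro(x) is Lipschitz continuous on ℝ with Lipschitz constant L_pro = 1. -/

import Mathlib

/-!
The derivative of `gPro` is `-gPro x * (x + gPro x)`, so by the mean value inequality it suffices
that `0 ≤ N (x Φ + N) ≤ Φ²` with `N = stdN x`, `Φ = PhiPro x`.  Both bounds are positivity
statements about the normal law restricted to `(-∞, x]`, whose first moments are
`∫ t N(t) dt = -N` and `∫ t² N(t) dt = Φ - x N` (`integral_mul_stdN`, `integral_sq_mul_stdN`):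
the lower bound is `∫ (x - t) N(t) dt ≥ 0`, and the upper bound says that the variance
`1 - x g - g²` of the truncated law is nonnegative.
-/

/-- The standard normal probability density function. -/
noncomputable def stdN (x : ℝ) : ℝ := (Real.sqrt (2 * Real.pi))⁻¹ * Real.exp (-x ^ 2 / 2)

/-- The standard normal cumulative distribution function (inverse probit link). -/
noncomputable def PhiPro (x : ℝ) : ℝ := ∫ t in Set.Iic x, stdN t

/-- The Mills-type ratio `g_pro(x) = 𝒩(x) / Φ_pro(x)`. -/
noncomputable def gPro (x : ℝ) : ℝ := stdN x / PhiPro x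

open MeasureTheory Set

lemma stdN_pos (x : ℝ) : 0 < stdN x := by
  unfold stdN; positivity

lemma hasDerivAt_stdN (x : ℝ) : HasDerivAt stdN (-(x * stdN x)) x := by
  have h : HasDerivAt (fun t : ℝ => -t ^ 2 / 2) (-x) x := by
    have := ((hasDerivAt_pow 2 x).neg).div_const 2
    refine this.congr_deriv ?_
    norm_num
    ring
  refine (h.exp.const_mul (Real.sqrt (2 * Real.pi))⁻¹).congr_deriv ?_
  unfold stdN
  ring

lemma continuous_stdN : Continuous stdN := by
  unfold stdN; fun_prop

lemma integrable_stdN : Integrable stdN := by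
  have := (integrable_exp_neg_mul_sq (b := 1 / 2) (by norm_num)).const_mul
    (Real.sqrt (2 * Real.pi))⁻¹
  refine this.congr (ae_of_all _ fun t => ?_)
  simp only [stdN]
  ring_nf

lemma integrable_mul_stdN : Integrable fun t => t * stdN t := by
  have := (integrable_mul_exp_neg_mul_sq (b := 1 / 2) (by norm_num)).const_mul
    (Real.sqrt (2 * Real.pi))⁻¹
  refine this.congr (ae_of_all _ fun t => ?_)
  simp only [stdN]
  ring_nf

lemma integrable_sq_mul_stdN : Integrable fun t => t ^ 2 * stdN t := by
  have := (integrable_rpow_mul_exp_neg_mul_sq (b := 1 / 2) (by norm_num)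
    (s := 2) (by norm_num)).const_mul (Real.sqrt (2 * Real.pi))⁻¹
  refine this.congr (ae_of_all _ fun t => ?_)
  simp only [stdN, Real.rpow_two]
  ring_nf

/-- The boundary term at `-∞` vanishes for an integrable function with integrable derivative. -/
lemma integral_Iic_deriv {f f' : ℝ → ℝ} (hd : ∀ t, HasDerivAt f (f' t) t)
    (hf : Integrable f) (hf' : Integrable f') (x : ℝ) : ∫ t in Iic x, f' t = f x := by
  have h0 := tendsto_zero_of_hasDerivAt_of_integrableOn_Iic (a := x) (fun t _ => hd t)
    hf'.integrableOn hf.integrableOn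
  simpa using integral_Iic_of_hasDerivAt_of_tendsto' (fun t _ => hd t) hf'.integrableOn h0

lemma integral_mul_stdN (x : ℝ) : ∫ t in Iic x, t * stdN t = -stdN x := by
  have h := integral_Iic_deriv hasDerivAt_stdN integrable_stdN integrable_mul_stdN.neg x
  rw [integral_neg] at h
  linarith

lemma integral_sq_mul_stdN (x : ℝ) :
    ∫ t in Iic x, t ^ 2 * stdN t = PhiPro x - x * stdN x := by
  have h := integral_Iic_deriv (f := fun t => t * stdN t)
    (f' := fun t => stdN t - t ^ 2 * stdN t)
    (fun t => ((hasDerivAt_id t).mul (hasDerivAt_stdN t)).congr_deriv (by simp; ring))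
    integrable_mul_stdN (integrable_stdN.sub integrable_sq_mul_stdN) x
  rw [integral_sub integrable_stdN.integrableOn integrable_sq_mul_stdN.integrableOn] at h
  unfold PhiPro
  linarith

lemma PhiPro_pos (x : ℝ) : 0 < PhiPro x := by
  unfold PhiPro
  rw [setIntegral_pos_iff_support_of_nonneg_ae (ae_of_all _ fun t => (stdN_pos t).le)
    integrable_stdN.integrableOn]
  have : Function.support stdN = univ := by
    ext t; simp [(stdN_pos t).ne']
  simp [this]

lemma hasDerivAt_PhiPro (x : ℝ) : HasDerivAt PhiPro (stdN x) x := by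
  have h : PhiPro = fun u => (∫ t in (0 : ℝ)..u, stdN t) + PhiPro 0 := by
    funext u
    have := intervalIntegral.integral_Iic_sub_Iic (a := 0) (b := u)
      integrable_stdN.integrableOn integrable_stdN.integrableOn
    unfold PhiPro
    linarith
  rw [h]
  exact (continuous_stdN.integral_hasStrictDerivAt 0 x).hasDerivAt.add_const _

/-- Equals `∫ (x - t) N(t) dt` over `t ≤ x`. -/
lemma mul_PhiPro_add_nonneg (x : ℝ) : 0 ≤ x * PhiPro x + stdN x := by
  have h : ∫ t in Iic x, (x * stdN t - t * stdN t) = x * PhiPro x + stdN x := by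
    rw [integral_sub (integrable_stdN.const_mul x).integrableOn integrable_mul_stdN.integrableOn,
      integral_const_mul, integral_mul_stdN, PhiPro, sub_neg_eq_add]
  rw [← h]
  refine setIntegral_nonneg measurableSet_Iic fun t ht => ?_
  rw [← sub_mul]
  exact mul_nonneg (sub_nonneg.2 ht) (stdN_pos t).le

/-- Nonnegativity of the variance of the normal law truncated to `(-∞, x]`, whose mean is
`-stdN x / PhiPro x`, with denominators cleared. -/
lemma stdN_mul_le_sq (x : ℝ) : stdN x * (x * PhiPro x + stdN x) ≤ PhiPro x ^ 2 := by
  have h : ∫ t in Iic x, (PhiPro x ^ 2 * (t ^ 2 * stdN t)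
      + 2 * PhiPro x * stdN x * (t * stdN t) + stdN x ^ 2 * stdN t)
      = PhiPro x * (PhiPro x ^ 2 - stdN x * (x * PhiPro x + stdN x)) := by
    have h2 := (integrable_sq_mul_stdN.const_mul (PhiPro x ^ 2)).integrableOn (s := Iic x)
    have h1 := (integrable_mul_stdN.const_mul (2 * PhiPro x * stdN x)).integrableOn (s := Iic x)
    have h0 := (integrable_stdN.const_mul (stdN x ^ 2)).integrableOn (s := Iic x)
    rw [integral_add (by exact h2.add h1) h0, integral_add h2 h1, integral_const_mul, integral_const_mul,
      integral_const_mul, integral_sq_mul_stdN, integral_mul_stdN, ← PhiPro]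
    ring
  have hn : 0 ≤ PhiPro x * (PhiPro x ^ 2 - stdN x * (x * PhiPro x + stdN x)) := by
    rw [← h]
    refine setIntegral_nonneg measurableSet_Iic fun t _ => ?_
    have := mul_nonneg (sq_nonneg (PhiPro x * t + stdN x)) (stdN_pos t).le
    linarith
  linarith [nonneg_of_mul_nonneg_right hn (PhiPro_pos x)]

lemma hasDerivAt_gPro (x : ℝ) :
    HasDerivAt gPro (-(stdN x * (x * PhiPro x + stdN x) / PhiPro x ^ 2)) x := by
  refine ((hasDerivAt_stdN x).div (hasDerivAt_PhiPro x) (PhiPro_pos x).ne').congr_deriv ?_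
  ring

/-- Scalar Lipschitz constant, probit case: for all `y z : ℝ`,
`|g_pro(y) − g_pro(z)| ≤ |y − z|`, i.e. `g_pro` is 1-Lipschitz on `ℝ`. -/
theorem stmt7 (y z : ℝ) : |gPro y - gPro z| ≤ |y - z| := by
  have hb : ∀ x ∈ (univ : Set ℝ),
      ‖-(stdN x * (x * PhiPro x + stdN x) / PhiPro x ^ 2)‖ ≤ 1 := by
    intro x _
    have hP := PhiPro_pos x
    have h0 := mul_nonneg (stdN_pos x).le (mul_PhiPro_add_nonneg x)
    rw [norm_neg, Real.norm_eq_abs, abs_of_nonneg (by positivity), div_le_one (by positivity)]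
    exact stdN_mul_le_sq x
  simpa using convex_univ.norm_image_sub_le_of_norm_hasDerivWithin_le
    (fun x _ => (hasDerivAt_gPro x).hasDerivWithinAt) hb (mem_univ z) (mem_univ y)
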